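/- If T' > √3/(4π) and x = 4/(1 + 16π²T'²), then 0 < x < 1 and f(1−x) > 4πT'. -/

import Mathlib

noncomputable section

/-- The `O(3)` (Batman) density function. -/
def fBat (t : ℝ) : ℝ :=
  if 1 < |t| ∧ |t| < 3 then Real.sqrt ((3 - |t|) / (1 + |t|))
  else if |t| < 1 then Real.sqrt ((3 - t) / (1 + t)) + Real.sqrt ((3 + t) / (1 - t))
  else 0

/-! On `|t| < 1` the density strictly exceeds each of its two positive summands. The Möbius map
`t ↦ (3 + t) / (1 - t)` under the second root has inverse `a ↦ 1 - 4 / (1 + a)`, so the choice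
`1 - x = 1 - 4 / (1 + s ^ 2)` with `s = 4 * π * T'` makes that summand equal to `s`. -/

theorem fBat_of_abs_lt_one {t : ℝ} (ht : |t| < 1) :
    fBat t = √((3 - t) / (1 + t)) + √((3 + t) / (1 - t)) := by
  rw [fBat, if_neg fun h ↦ ht.not_gt h.1, if_pos ht]

theorem sqrt_three_add_div_one_sub_lt_fBat {t : ℝ} (ht : |t| < 1) :
    √((3 + t) / (1 - t)) < fBat t := by
  obtain ⟨neg_one_lt, lt_one⟩ := abs_lt.mp ht
  have other_summand_pos : 0 < √((3 - t) / (1 + t)) :=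
    Real.sqrt_pos.mpr (div_pos (by linarith) (by linarith))
  rw [fBat_of_abs_lt_one ht]
  exact lt_add_of_pos_left _ other_summand_pos

theorem three_add_div_one_sub_one_sub_four_div {K : Type*} [Field K] [NeZero (4 : K)] {a : K}
    (ha : 1 + a ≠ 0) : (3 + (1 - 4 / (1 + a))) / (1 - (1 - 4 / (1 + a))) = a := by
  rw [sub_sub_cancel, div_eq_iff (div_ne_zero four_ne_zero ha)]
  field_simp
  ring

theorem abs_one_sub_four_div_one_add_lt_one {K : Type*} [Field K] [LinearOrder K]
    [IsStrictOrderedRing K] {a : K} (ha : 1 < a) : |1 - 4 / (1 + a)| < 1 := by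
  have one_add_pos : 0 < 1 + a := by linarith
  have quotient_pos : 0 < 4 / (1 + a) := div_pos four_pos one_add_pos
  have quotient_lt_two : 4 / (1 + a) < 2 := by
    rw [div_lt_iff₀ one_add_pos]
    linarith
  rw [abs_lt]
  constructor <;> linarith

theorem abs_lt_fBat_one_sub_four_div {s : ℝ} (hs : 1 < |s|) :
    |s| < fBat (1 - 4 / (1 + s ^ 2)) := by
  have one_add_sq_ne_zero : 1 + s ^ 2 ≠ 0 := by positivity
  have one_lt_sq : 1 < s ^ 2 := (one_lt_sq_iff_one_lt_abs s).mpr hs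
  have second_summand_lt :=
    sqrt_three_add_div_one_sub_lt_fBat (abs_one_sub_four_div_one_add_lt_one one_lt_sq)
  rwa [three_add_div_one_sub_one_sub_four_div one_add_sq_ne_zero,
    Real.sqrt_sq_eq_abs] at second_summand_lt

theorem density_exceeds_threshold (T' : ℝ) (hT : Real.sqrt 3 / (4 * Real.pi) < T')
    (x : ℝ) (hx : x = 4 / (1 + 16 * Real.pi ^ 2 * T' ^ 2)) :
    0 < x ∧ x < 1 ∧ 4 * Real.pi * T' < fBat (1 - x) := by
  set s := 4 * Real.pi * T' with s_def
  have sqrt_three_lt : √3 < s := (div_lt_iff₀' (by positivity)).mp hT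
  have three_lt_sq : 3 < s ^ 2 := Real.lt_sq_of_sqrt_lt sqrt_three_lt
  have one_lt_abs : 1 < |s| := (one_lt_sq_iff_one_lt_abs s).mp (by linarith)
  have x_eq : x = 4 / (1 + s ^ 2) := by rw [hx, s_def]; ring
  have x_lt_one : 4 / (1 + s ^ 2) < 1 := by
    rw [div_lt_one (by positivity)]
    linarith
  rw [x_eq]
  exact ⟨by positivity, x_lt_one,
    (le_abs_self s).trans_lt (abs_lt_fBat_one_sub_four_div one_lt_abs)⟩

end
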